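/- Let R be a Cohen-Macaulay local ring and M a reduced G_C-perfect R-module of G_C-dimension n. Assume that M^C has finite G_C-dimension and that M^* = Hom_R(M,R) has finite projective dimension. Then depth_R(λM) = n + depth_R(Ext_R^n(M,C)). In particular, λM is a free R-module if and only if depth_R(Ext_R^n(M,C)) = dim(R) − n. -/

import Mathlib

open CategoryTheory TensorProduct

noncomputable section

universe u

variable (R : Type u) [CommRing R]

/-- The `i`-th Ext module `Ext_R^i(M, N)`. -/
def ExtM (M N : ModuleCat.{u} R) (i : ℕ) : ModuleCat.{u} R :=
  ((Ext R (ModuleCat.{u} R) i).obj (Opposite.op M)).obj N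

/-- The `i`-th Tor module `Tor_i^R(M, N)`. -/
def TorM (M N : ModuleCat.{u} R) (i : ℕ) : ModuleCat.{u} R :=
  ((Tor (ModuleCat.{u} R) i).obj M).obj N

/-- The biduality (evaluation) map `M → Hom_R(Hom_R(M, C), C)`. -/
def bidualityMap (C M : ModuleCat.{u} R) :
    ↥M →ₗ[R] ((↥M →ₗ[R] ↥C) →ₗ[R] ↥C) :=
  (LinearMap.id : (↥M →ₗ[R] ↥C) →ₗ[R] (↥M →ₗ[R] ↥C)).flip

/-- `C` is a semidualizing `R`-module. -/
def IsSemidualizing (C : ModuleCat.{u} R) : Prop :=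
  Module.Finite R ↥C ∧
  Function.Bijective (fun r : R => (r • LinearMap.id : ↥C →ₗ[R] ↥C)) ∧
  ∀ i : ℕ, 0 < i → Subsingleton (ExtM R C C i)

/-- `M` is totally `C`-reflexive. -/
def IsTotallyCReflexive (C M : ModuleCat.{u} R) : Prop :=
  Module.Finite R ↥M ∧
  Function.Bijective (bidualityMap R C M) ∧
  (∀ i : ℕ, 0 < i → Subsingleton (ExtM R M C i)) ∧
  (∀ i : ℕ, 0 < i → Subsingleton (ExtM R (ModuleCat.of R (↥M →ₗ[R] ↥C)) C i))

/-- `G_C`-dimension of `M` is at most `n`: there is an exact sequence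
`0 → X_n → ⋯ → X_0 → M → 0` with each `X_i` totally `C`-reflexive. -/
def gcdimLE (C : ModuleCat.{u} R) : ℕ → ModuleCat.{u} R → Prop
  | 0, M => IsTotallyCReflexive R C M
  | n+1, M => ∃ (X K : ModuleCat.{u} R) (f : ↥K →ₗ[R] ↥X) (g : ↥X →ₗ[R] ↥M),
      Function.Injective f ∧ Function.Surjective g ∧
      LinearMap.ker g = LinearMap.range f ∧
      IsTotallyCReflexive R C X ∧ gcdimLE C n K

/-- The `G_C`-dimension of `M`, as an element of `ℕ∞`. -/
def gcdim (C M : ModuleCat.{u} R) : ℕ∞ :=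
  sInf ((fun n : ℕ => (n : ℕ∞)) '' {n | gcdimLE R C n M})

/-- `grade_R(M) = inf { i | Ext_R^i(M, R) ≠ 0 }`, with `grade 0 = ∞`. -/
def gradeR (M : ModuleCat.{u} R) : ℕ∞ :=
  sInf ((fun i : ℕ => (i : ℕ∞)) ''
    {i | ¬ Subsingleton (ExtM R M (ModuleCat.of R R) i)})

/-- Reduced grade of `M` with respect to `C`. -/
def rgrade (C M : ModuleCat.{u} R) : ℕ∞ :=
  sInf ((fun i : ℕ => (i : ℕ∞)) ''
    {i | 0 < i ∧ ¬ Subsingleton (ExtM R M C i)})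

/-- `M` is reduced `G_C`-perfect. -/
def IsReducedGCPerfect (C M : ModuleCat.{u} R) : Prop :=
  gcdim R C M ≠ ⊤ ∧ rgrade R C M = gcdim R C M

/-- `M` is `G_C`-perfect. -/
def IsGCPerfect (C M : ModuleCat.{u} R) : Prop :=
  gcdim R C M ≠ ⊤ ∧ gradeR R M = gcdim R C M

/-- `π : P → M` is a projective cover: `P` projective, `π` surjective with superfluous kernel. -/
def IsProjectiveCover {P M : ModuleCat.{u} R} (π : ↥P →ₗ[R] ↥M) : Prop :=
  Module.Projective R ↥P ∧ Function.Surjective π ∧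
  ∀ N : Submodule R ↥P, N ⊔ LinearMap.ker π = ⊤ → N = ⊤

/-- `P₁ →d P₀ →π M → 0` is a minimal projective presentation of `M`. -/
def IsMinimalPresentation {P1 P0 M : ModuleCat.{u} R}
    (d : ↥P1 →ₗ[R] ↥P0) (π : ↥P0 →ₗ[R] ↥M) : Prop :=
  Module.Finite R ↥P1 ∧ Module.Finite R ↥P0 ∧
  IsProjectiveCover R π ∧
  LinearMap.range d = LinearMap.ker π ∧
  Module.Projective R ↥P1 ∧
  ∀ N : Submodule R ↥P1, N ⊔ LinearMap.ker d = ⊤ → N = ⊤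

/-- `T` is (a module isomorphic to) the transpose `Tr_C(M)` of `M` with respect to `C`,
computed from a minimal projective presentation of `M`. -/
def IsTransposeC (C M T : ModuleCat.{u} R) : Prop :=
  ∃ (P1 P0 : ModuleCat.{u} R) (d : ↥P1 →ₗ[R] ↥P0) (π : ↥P0 →ₗ[R] ↥M),
    IsMinimalPresentation R d π ∧
    Nonempty (↥T ≃ₗ[R]
      ((↥P1 →ₗ[R] ↥C) ⧸ LinearMap.range (LinearMap.lcomp R ↥C d)))

/-- `T` is the usual Auslander transpose `Tr(M) = Tr_R(M)`. -/
def IsTranspose (M T : ModuleCat.{u} R) : Prop :=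
  IsTransposeC R (ModuleCat.of R R) M T

/-- `S` is (a module isomorphic to) the first syzygy `Ω N`, i.e. the kernel of a
projective cover of `N`. -/
def IsSyzygyOf (N S : ModuleCat.{u} R) : Prop :=
  ∃ (P : ModuleCat.{u} R) (π : ↥P →ₗ[R] ↥N),
    Module.Finite R ↥P ∧ IsProjectiveCover R π ∧
    Nonempty (↥S ≃ₗ[R] LinearMap.ker π)

/-- `S` is (a module isomorphic to) the `n`-th syzygy `Ωⁿ M`. -/
def IsNthSyzygy : ℕ → ModuleCat.{u} R → ModuleCat.{u} R → Prop
  | 0, M, S => Nonempty (↥S ≃ₗ[R] ↥M)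
  | n+1, M, S => ∃ K : ModuleCat.{u} R, IsNthSyzygy n M K ∧ IsSyzygyOf R K S

/-- `L` is (a module isomorphic to) `λ M = Ω Tr M`. -/
def IsLambda (M L : ModuleCat.{u} R) : Prop :=
  ∃ T : ModuleCat.{u} R, IsTranspose R M T ∧ IsSyzygyOf R T L

/-- `M` is horizontally linked, i.e. `M ≅ λλM`. -/
def IsHorizontallyLinked (M : ModuleCat.{u} R) : Prop :=
  ∃ L L2 : ModuleCat.{u} R, IsLambda R M L ∧ IsLambda R L L2 ∧
    Nonempty (↥M ≃ₗ[R] ↥L2)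

/-- `M` is stable: it has no non-zero projective direct summand. -/
def IsStable (M : ModuleCat.{u} R) : Prop :=
  ∀ (P N : ModuleCat.{u} R), Module.Projective R ↥P →
    Nonempty (↥M ≃ₗ[R] (↥P × ↥N)) → Subsingleton ↥P

/-- `N` belongs to the Auslander class `A_C`. -/
def MemAuslanderClass (C N : ModuleCat.{u} R) : Prop :=
  Function.Bijective (TensorProduct.mk R ↥N ↥C) ∧
  (∀ i : ℕ, 0 < i → Subsingleton (TorM R C N i)) ∧
  (∀ i : ℕ, 0 < i → Subsingleton
    (ExtM R C (ModuleCat.of R (↥N ⊗[R] ↥C)) i))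

/-- `R` is semiperfect: every finite `R`-module has a projective cover. -/
def IsSemiperfectRing : Prop :=
  ∀ M : ModuleCat.{u} R, Module.Finite R ↥M →
    ∃ (P : ModuleCat.{u} R) (π : ↥P →ₗ[R] ↥M),
      Module.Finite R ↥P ∧ IsProjectiveCover R π

/-- Depth over a local ring, via Ext from the residue field. -/
def rdepth [IsLocalRing R] (M : ModuleCat.{u} R) : ℕ∞ :=
  sInf ((fun i : ℕ => (i : ℕ∞)) ''
    {i | ¬ Subsingleton
      (ExtM R (ModuleCat.of R (IsLocalRing.ResidueField R)) M i)})

/-- Projective dimension at most `n`. -/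
def pdimLE : ℕ → ModuleCat.{u} R → Prop
  | 0, M => Module.Projective R ↥M
  | n+1, M => ∃ (X K : ModuleCat.{u} R) (f : ↥K →ₗ[R] ↥X) (g : ↥X →ₗ[R] ↥M),
      Function.Injective f ∧ Function.Surjective g ∧
      LinearMap.ker g = LinearMap.range f ∧
      Module.Projective R ↥X ∧ pdimLE n K

/-- Projective dimension, as an element of `ℕ∞`. -/
def pdim (M : ModuleCat.{u} R) : ℕ∞ :=
  sInf ((fun n : ℕ => (n : ℕ∞)) '' {n | pdimLE R n M})

/-- `M` is `C`-`k`-torsionless. -/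
def IsCkTorsionless (C M : ModuleCat.{u} R) (k : ℕ) : Prop :=
  k = 0 ∨ ∀ T : ModuleCat.{u} R, IsTransposeC R C M T →
    ∀ i : ℕ, 1 ≤ i → i ≤ k → Subsingleton (ExtM R T C i)

/-- `M` is a `C`-syzygy: it embeds into `P ⊗_R C` with `P` finite projective. -/
def IsCSyzygy (C M : ModuleCat.{u} R) : Prop :=
  ∃ (P : ModuleCat.{u} R), Module.Finite R ↥P ∧ Module.Projective R ↥P ∧
    ∃ f : ↥M →ₗ[R] (↥P ⊗[R] ↥C), Function.Injective f


/-- There is an exact sequence `0 → N → X_k → ⋯ → X_1 → M → 0` of finite `R`-modules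
with `Ext_R^i(X_j, C) = 0` for all `i > 0` and all `j`. -/
def ExtVanishingChain (C : ModuleCat.{u} R) : ℕ → ModuleCat.{u} R → ModuleCat.{u} R → Prop
  | 0, N, M => Nonempty (↥N ≃ₗ[R] ↥M)
  | k+1, N, M => ∃ (X K : ModuleCat.{u} R) (f : ↥K →ₗ[R] ↥X) (g : ↥X →ₗ[R] ↥M),
      Function.Injective f ∧ Function.Surjective g ∧
      LinearMap.ker g = LinearMap.range f ∧
      Module.Finite R ↥X ∧ (∀ i : ℕ, 0 < i → Subsingleton (ExtM R X C i)) ∧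
      ExtVanishingChain C k N K


/-!
Present `M` by `P₁ → P₀ → M → 0`, with transpose `T = Tr M`, and let `n` be the only positive
degree with `Ext^n(M, C) ≠ 0`. Dualizing the presentation exhibits `M^*` as a second syzygy of `T`,
so `T` has finite projective dimension. As `Ext^n(M, C) ≠ 0`, the module `M` is not projective, so
neither is `T`, and the Auslander–Buchsbaum argument gives `depth T < depth R`. A semidualizing
module behaves like `R` on modules of finite projective dimension: `T ⊗ C` is the cokernel of
`Hom(P₀, C) → Hom(P₁, C)`, and it has the same depth as `T`. That cokernel loses one unit of depth
each time the presentation is moved one step along a projective resolution of `M`, until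
`Ext^n(M, C)` is reached, so `depth T = depth Ext^n(M, C) + n - 1`. Since `depth T < depth R`,
passing from `T` to its syzygy `λM` adds the missing unit.
-/

section ExtComparison

variable {R} {X Y : ModuleCat.{u} R} (P : ProjectiveResolution X)

lemma extMk_zero_eq_zero_iff (f : P.complex.X 0 ⟶ Y) (hf : P.complex.d 1 0 ≫ f = 0) :
    P.extMk f 1 rfl hf = 0 ↔ f = 0 := by
  simp only [← P.extEquivCohomologyClass.apply_eq_iff_eq,
    ProjectiveResolution.extEquivCohomologyClass_extMk,
    ProjectiveResolution.extEquivCohomologyClass_zero,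
    CochainComplex.HomComplex.CohomologyClass.mk_eq_zero_iff]
  rw [CochainComplex.HomComplex.Cocycle.toSingleMk_mem_coboundaries_iff _ _ _ _ _ 1 (by simp)]
  constructor
  · rintro ⟨g, hg⟩
    have isZero_one : Limits.IsZero (P.cochainComplex.X 1) :=
      CochainComplex.isZero_of_isStrictlyLE _ 0 1 (by norm_num)
    rw [isZero_one.eq_of_src g 0] at hg
    rw [← cancel_epi (P.cochainComplexXIso (-(0 : ℕ)) 0 rfl).hom]
    simpa using hg.symm
  · rintro rfl
    exact ⟨0, by simp⟩

lemma extMk_smul {n : ℕ} (f : P.complex.X n ⟶ Y) (hf : P.complex.d (n + 1) n ≫ f = 0) (r : R) :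
    P.extMk (r • f) (n + 1) rfl (by rw [Linear.comp_smul, hf, smul_zero]) =
      r • P.extMk f (n + 1) rfl hf := by
  rw [Abelian.Ext.smul_eq_comp_mk₀, ProjectiveResolution.extMk_comp_mk₀]
  congr 1

variable (Y) in
/-- The part `Hom(P_{n-1}, Y) → Hom(P_n, Y) → Hom(P_{n+1}, Y)` of the complex computing
`ExtM R X Y n`, where `P` is a projective resolution of `X`. -/
abbrev homShortComplex (n : ℕ) : ShortComplex (ModuleCat.{u} R) :=
  (P.complex.linearYonedaObj R Y).sc n

lemma homShortComplex_g_apply_eq_zero_iff {n : ℕ} (f : P.complex.X n ⟶ Y) :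
    (homShortComplex Y P n).g.hom f = 0 ↔ P.complex.d (n + 1) n ≫ f = 0 := by
  change ((P.complex.linearYonedaObj R Y).d n ((ComplexShape.up ℕ).next n)).hom f = 0 ↔ _
  rw [show (ComplexShape.up ℕ).next n = n + 1 by simp]
  rfl

lemma exists_homShortComplex_f_apply_eq_iff {n : ℕ} (f : P.complex.X n ⟶ Y)
    (hf : P.complex.d (n + 1) n ≫ f = 0) :
    (∃ y, (homShortComplex Y P n).f.hom y = f) ↔ P.extMk f (n + 1) rfl hf = 0 := by
  change (∃ y, ((P.complex.linearYonedaObj R Y).d ((ComplexShape.up ℕ).prev n) n).hom y = f) ↔ _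
  rcases n with _ | p
  · rw [extMk_zero_eq_zero_iff, HomologicalComplex.shape _ _ _ (by simp)]
    exact ⟨fun ⟨y, hy⟩ => hy ▸ rfl, fun h => ⟨0, h ▸ rfl⟩⟩
  · rw [P.extMk_eq_zero_iff _ _ _ _ p rfl, show (ComplexShape.up ℕ).prev (p + 1) = p by simp]
    rfl

variable (Y) in
/-- The map sending an `n`-cocycle `P_n → Y` to its class in `Ext X Y n`. -/
def cocycleToExt (n : ℕ) :
    LinearMap.ker (homShortComplex Y P n).g.hom →ₗ[R] Abelian.Ext X Y n where
  toFun f := P.extMk (f.1 : P.complex.X n ⟶ Y) (n + 1) rfl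
    ((homShortComplex_g_apply_eq_zero_iff P _).1 f.2)
  map_add' _ _ := (P.add_extMk _ _ _ _ _ _).symm
  map_smul' _ _ := extMk_smul P _ _ _

lemma cocycleToExt_surjective (n : ℕ) : Function.Surjective (cocycleToExt Y P n) := by
  intro α
  obtain ⟨f, hf, rfl⟩ := P.extMk_surjective α (n + 1) rfl
  exact ⟨⟨f, (homShortComplex_g_apply_eq_zero_iff P _).2 hf⟩, rfl⟩

lemma range_moduleCatToCycles_eq_ker_cocycleToExt (n : ℕ) :
    LinearMap.range (homShortComplex Y P n).moduleCatToCycles =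
      LinearMap.ker (cocycleToExt Y P n) := by
  ext f
  rw [LinearMap.mem_ker]
  refine Iff.trans ?_ (exists_homShortComplex_f_apply_eq_iff P _
    ((homShortComplex_g_apply_eq_zero_iff P _).1 f.2))
  exact exists_congr fun _ => Subtype.ext_iff

variable (X Y) in
theorem nonempty_extM_linearEquiv_ext (n : ℕ) :
    Nonempty (ExtM R X Y n ≃ₗ[R] Abelian.Ext X Y n) := by
  let P := projectiveResolution X
  have toHomology : ExtM R X Y n ≃ₗ[R] _ :=
    (P.isoExt n Y ≪≫ (homShortComplex Y P n).moduleCatHomologyIso).toLinearEquiv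
  exact ⟨toHomology ≪≫ₗ
    Submodule.quotEquivOfEq _ _ (range_moduleCatToCycles_eq_ker_cocycleToExt P n) ≪≫ₗ
    (cocycleToExt Y P n).quotKerEquivOfSurjective (cocycleToExt_surjective P n)⟩

lemma subsingleton_extM_iff {n : ℕ} :
    Subsingleton (ExtM R X Y n) ↔ Subsingleton (Abelian.Ext X Y n) :=
  (nonempty_extM_linearEquiv_ext X Y n).some.toEquiv.subsingleton_congr

end ExtComparison

section ShortExact

variable {A B D X Y : Type u} [AddCommGroup A] [Module R A] [AddCommGroup B] [Module R B]
  [AddCommGroup D] [Module R D] [AddCommGroup X] [Module R X] [AddCommGroup Y] [Module R Y]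

/-- `Ext^i(X, Y)` for unbundled modules. -/
abbrev ExtMod (X Y : Type u) [AddCommGroup X] [Module R X] [AddCommGroup Y] [Module R Y]
    (i : ℕ) : Type u :=
  Abelian.Ext (ModuleCat.of R X) (ModuleCat.of R Y) i

/-- The identification of `Hom(X, Y)` with `Ext^0(X, Y)`. -/
def extOfHom : (X →ₗ[R] Y) ≃ₗ[R] ExtMod R X Y 0 :=
  (ModuleCat.homLinearEquiv (S := R) (M := .of R X) (N := .of R Y)).symm ≪≫ₗ
    Abelian.Ext.linearEquiv₀.symm

variable {R}

lemma extOfHom_comp (g : B →ₗ[R] D) (f : A →ₗ[R] B) :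
    extOfHom R (g ∘ₗ f) = (extOfHom R f).comp (extOfHom R g) (add_zero 0) :=
  (Abelian.Ext.mk₀_comp_mk₀ (ModuleCat.ofHom f) (ModuleCat.ofHom g)).symm

lemma subsingleton_extMod_zero_iff :
    Subsingleton (ExtMod R X Y 0) ↔ Subsingleton (X →ₗ[R] Y) :=
  (extOfHom R).symm.toEquiv.subsingleton_congr

lemma subsingleton_extMod_of_projective [Module.Projective R X] (i : ℕ) :
    Subsingleton (ExtMod R X Y (i + 1)) := by
  have : Projective (ModuleCat.of R X) := (IsProjective.iff_projective X).1 inferInstance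
  exact Abelian.Ext.subsingleton_of_projective _ _ _

lemma subsingleton_extMod_of_sum_comp_eq_id {ι : Type*} [Fintype ι] (r : ι → B →ₗ[R] A)
    (s : ι → A →ₗ[R] B) (hsr : ∑ j, s j ∘ₗ r j = LinearMap.id) {i : ℕ}
    (hA : Subsingleton (ExtMod R X A i)) : Subsingleton (ExtMod R X B i) := by
  refine subsingleton_of_forall_eq 0 fun x => ?_
  calc x = x.comp (extOfHom R (∑ j, s j ∘ₗ r j)) (add_zero i) := by
        rw [hsr]; exact x.comp_mk₀_id.symm
    _ = ∑ j, x.comp (extOfHom R (s j ∘ₗ r j)) (add_zero i) := by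
        rw [map_sum, Abelian.Ext.comp_sum]
    _ = 0 := Finset.sum_eq_zero fun j _ => by
        rw [extOfHom_comp, ← Abelian.Ext.comp_assoc _ _ _ (add_zero i) (add_zero 0) (by lia),
          Subsingleton.elim (x.comp (extOfHom R (r j)) (add_zero i)) 0, Abelian.Ext.zero_comp]

lemma subsingleton_extMod_congr_right (e : A ≃ₗ[R] B) (i : ℕ) :
    Subsingleton (ExtMod R X A i) ↔ Subsingleton (ExtMod R X B i) :=
  ⟨subsingleton_extMod_of_sum_comp_eq_id (ι := Unit) (fun _ => e.symm.toLinearMap)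
    (fun _ => e.toLinearMap) (by simp),
   subsingleton_extMod_of_sum_comp_eq_id (ι := Unit) (fun _ => e.toLinearMap)
    (fun _ => e.symm.toLinearMap) (by simp)⟩

lemma comp_extOfHom_eq_zero_of_mem_annihilator_smul_top {f : A →ₗ[R] B}
    (hf : f ∈ Module.annihilator R X • (⊤ : Submodule R (A →ₗ[R] B))) {i : ℕ}
    (x : ExtMod R X A i) : x.comp (extOfHom R f) (add_zero i) = 0 := by
  induction hf using Submodule.smul_induction_on' with
  | smul r hr f _ =>
    rw [map_smul, Abelian.Ext.comp_smul, Abelian.Ext.smul_eq_comp_mk₀]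
    exact congr($(Abelian.Ext.postcomp_smul_id_eq_zero_of_mem_annihilator hr i) _)
  | add f _ g _ hf hg => rw [map_add, Abelian.Ext.comp_add, hf, hg, add_zero]

/-- `0 → A → B → D → 0` is a short exact sequence of modules. -/
structure IsShortExact (f : A →ₗ[R] B) (g : B →ₗ[R] D) : Prop where
  injective : Function.Injective f
  exact : Function.Exact f g
  surjective : Function.Surjective g

lemma isShortExact_subtype_ker {g : B →ₗ[R] D} (hg : Function.Surjective g) :
    IsShortExact (LinearMap.ker g).subtype g :=
  ⟨Subtype.val_injective, LinearMap.exact_subtype_ker_map g, hg⟩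

lemma isShortExact_mkQ {f : A →ₗ[R] B} (hf : Function.Injective f) :
    IsShortExact f (LinearMap.range f).mkQ :=
  ⟨hf, LinearMap.exact_map_mkQ_range f, Submodule.mkQ_surjective _⟩

namespace IsShortExact

variable {f : A →ₗ[R] B} {g : B →ₗ[R] D} (h : IsShortExact f g)
include h

/-- The bundled form of a short exact sequence of modules. -/
abbrev shortComplex : ShortComplex (ModuleCat.{u} R) :=
  ModuleCat.shortComplexOfCompEqZero f g h.exact.linearMap_comp_eq_zero

lemma shortExact : h.shortComplex.ShortExact :=
  ModuleCat.shortComplex_shortExact _ h.exact h.injective h.surjective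

lemma subsingleton_extMod_middle {i : ℕ} (hA : Subsingleton (ExtMod R X A i))
    (hD : Subsingleton (ExtMod R X D i)) : Subsingleton (ExtMod R X B i) := by
  refine subsingleton_of_forall_eq 0 fun x => ?_
  obtain ⟨y, rfl⟩ := Abelian.Ext.covariant_sequence_exact₂ _ h.shortExact x (hD.elim _ _)
  rw [hA.elim y 0, Abelian.Ext.zero_comp]

lemma subsingleton_extMod_right {i : ℕ} (hB : Subsingleton (ExtMod R X B i))
    (hA : Subsingleton (ExtMod R X A (i + 1))) : Subsingleton (ExtMod R X D i) := by
  refine subsingleton_of_forall_eq 0 fun x => ?_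
  obtain ⟨y, rfl⟩ := Abelian.Ext.covariant_sequence_exact₃ _ h.shortExact x rfl (hA.elim _ _)
  rw [hB.elim y 0, Abelian.Ext.zero_comp]

lemma eq_zero_of_comp_extOfHom_eq_zero {i : ℕ} (hD : Subsingleton (ExtMod R X D i))
    (x : ExtMod R X A (i + 1)) (hx : x.comp (extOfHom R f) (add_zero _) = 0) : x = 0 := by
  obtain ⟨y, rfl⟩ := Abelian.Ext.covariant_sequence_exact₁ _ h.shortExact x hx rfl
  rw [hD.elim y 0, Abelian.Ext.zero_comp]

lemma eq_zero_of_comp_extOfHom_eq_zero_of_degree_zero (x : ExtMod R X A 0)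
    (hx : x.comp (extOfHom R f) (add_zero _) = 0) : x = 0 := by
  obtain ⟨φ, rfl⟩ := (extOfHom R).surjective x
  rw [← extOfHom_comp, LinearEquiv.map_eq_zero_iff] at hx
  rw [LinearEquiv.map_eq_zero_iff]
  exact LinearMap.ext fun y => h.injective <| by simpa using LinearMap.congr_fun hx y

lemma exists_lift (hA : Subsingleton (ExtMod R X A 1)) (φ : X →ₗ[R] D) :
    ∃ ψ : X →ₗ[R] B, g ∘ₗ ψ = φ := by
  obtain ⟨x, hx⟩ := Abelian.Ext.covariant_sequence_exact₃ _ h.shortExact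
    (extOfHom R φ) rfl (hA.elim _ _)
  obtain ⟨ψ, rfl⟩ := (extOfHom R).surjective x
  exact ⟨ψ, (extOfHom R).injective ((extOfHom_comp g ψ).trans hx)⟩

variable (Y) in
/-- The connecting map `Ext^i(A, Y) → Ext^{i+1}(D, Y)`. -/
def connectingHom (i : ℕ) : ExtMod R A Y i →ₗ[R] ExtMod R D Y (i + 1) where
  toFun x := h.shortExact.extClass.comp x (add_comm 1 i)
  map_add' _ _ := Abelian.Ext.comp_add _ _ _ _
  map_smul' _ _ := Abelian.Ext.comp_smul _ _ _ _

lemma connectingHom_surjective {i : ℕ} (hB : Subsingleton (ExtMod R B Y (i + 1))) :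
    Function.Surjective (h.connectingHom Y i) := fun x =>
  Abelian.Ext.contravariant_sequence_exact₃ h.shortExact _ x (hB.elim _ _) (add_comm 1 i)

lemma connectingHom_injective {i : ℕ} (hB : Subsingleton (ExtMod R B Y i)) :
    Function.Injective (h.connectingHom Y i) := by
  refine (injective_iff_map_eq_zero _).2 fun x hx => ?_
  obtain ⟨y, rfl⟩ := Abelian.Ext.contravariant_sequence_exact₁ h.shortExact _ x (add_comm 1 i) hx
  rw [hB.elim y 0, Abelian.Ext.comp_zero]

variable (Y) in
/-- Dimension shifting along a short exact sequence with projective middle term. -/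
def extSuccEquiv [Module.Projective R B] (i : ℕ) :
    ExtMod R A Y (i + 1) ≃ₗ[R] ExtMod R D Y (i + 2) :=
  LinearEquiv.ofBijective (h.connectingHom Y (i + 1))
    ⟨h.connectingHom_injective (subsingleton_extMod_of_projective i),
      h.connectingHom_surjective (subsingleton_extMod_of_projective (i + 1))⟩

lemma range_lcomp_eq_ker_connectingHom :
    LinearMap.range (LinearMap.lcomp R Y f) =
      LinearMap.ker (h.connectingHom Y 0 ∘ₗ (extOfHom R).toLinearMap) := by
  ext φ
  constructor
  · rintro ⟨ψ, rfl⟩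
    exact (congrArg (h.connectingHom Y 0) (extOfHom_comp ψ f)).trans
      (h.shortExact.extClass_comp_assoc (extOfHom R ψ) (h := add_comm 1 0))
  · intro hφ
    obtain ⟨x, hx⟩ := Abelian.Ext.contravariant_sequence_exact₁ h.shortExact _
      (extOfHom R φ) (add_comm 1 0) hφ
    obtain ⟨ψ, rfl⟩ := (extOfHom R).surjective x
    exact ⟨ψ, (extOfHom R).injective ((extOfHom_comp ψ f).trans hx)⟩

/-- `Ext^1(D, Y)` is the cokernel of the restriction map `Hom(B, Y) → Hom(A, Y)`. -/
def quotRangeLcompEquiv (hB : Subsingleton (ExtMod R B Y 1)) :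
    ((A →ₗ[R] Y) ⧸ LinearMap.range (LinearMap.lcomp R Y f)) ≃ₗ[R] ExtMod R D Y 1 :=
  Submodule.quotEquivOfEq _ _ h.range_lcomp_eq_ker_connectingHom ≪≫ₗ
    LinearMap.quotKerEquivOfSurjective _
      ((h.connectingHom_surjective hB).comp (extOfHom R).surjective)

lemma lcomp_surjective (hD : Subsingleton (ExtMod R D Y 1)) :
    Function.Surjective (LinearMap.lcomp R Y f) := by
  rw [← LinearMap.range_eq_top, h.range_lcomp_eq_ker_connectingHom, LinearMap.ker_eq_top]
  exact LinearMap.ext fun _ => hD.elim _ _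

lemma lcomp (hD : Subsingleton (ExtMod R D Y 1)) :
    IsShortExact (LinearMap.lcomp R Y g) (LinearMap.lcomp R Y f) where
  injective := LinearMap.lcomp_injective_of_surjective g h.surjective
  exact := LinearMap.exact_lcomp_of_exact_of_surjective _ h.exact h.surjective
  surjective := h.lcomp_surjective hD

end IsShortExact

end ShortExact

section HomModules

variable {R}
variable {A B D X : Type u} [AddCommGroup A] [Module R A] [AddCommGroup B] [Module R B]
  [AddCommGroup D] [Module R D] [AddCommGroup X] [Module R X]

lemma IsShortExact.compRight {f : A →ₗ[R] B} {g : B →ₗ[R] D} (h : IsShortExact f g)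
    (hA : Subsingleton (ExtMod R X A 1)) :
    IsShortExact (LinearMap.compRight R f : (X →ₗ[R] A) →ₗ[R] X →ₗ[R] B)
      (LinearMap.compRight R g) where
  injective _ _ hφ := LinearMap.ext fun x => h.injective (LinearMap.congr_fun hφ x)
  exact φ := by
    refine ⟨fun hφ => ?_, ?_⟩
    · have mem_range x : φ x ∈ LinearMap.range f := (h.exact _).1 (LinearMap.congr_fun hφ x)
      exact ⟨φ.codRestrictOfInjective f h.injective mem_range,
        LinearMap.codRestrictOfInjective_comp _ _ _ _⟩
    · rintro ⟨ψ, rfl⟩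
      exact LinearMap.ext fun x => h.exact.apply_apply_eq_zero (ψ x)
  surjective := h.exists_lift hA

variable (R) in
lemma exists_sum_smul_eq_of_projective (P : Type*) [AddCommGroup P] [Module R P]
    [Module.Finite R P] [Module.Projective R P] :
    ∃ (n : ℕ) (v : Fin n → P) (s : Fin n → P →ₗ[R] R), ∀ x, ∑ j, s j x • v j = x := by
  obtain ⟨n, p, s, -, -, hps⟩ := Module.Finite.exists_comp_eq_id_of_projective R P
  refine ⟨n, fun j => p (Pi.single j 1), fun j => LinearMap.proj j ∘ₗ s, fun x => ?_⟩
  calc _ = p (∑ j, s x j • Pi.single j 1) := by simp only [map_sum, map_smul]; rfl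
    _ = p (s x) := by rw [← pi_eq_sum_univ' (s x)]
    _ = x := LinearMap.congr_fun hps x

lemma subsingleton_extMod_hom_of_projective {P : Type u} [AddCommGroup P] [Module R P]
    [Module.Finite R P] [Module.Projective R P] {i : ℕ} (hA : Subsingleton (ExtMod R X A i)) :
    Subsingleton (ExtMod R X (P →ₗ[R] A) i) := by
  obtain ⟨n, v, s, hvs⟩ := exists_sum_smul_eq_of_projective R P
  refine subsingleton_extMod_of_sum_comp_eq_id (fun j => LinearMap.applyₗ (v j))
    (fun j => LinearMap.smulRightₗ (s j)) (LinearMap.ext₂ fun φ x => ?_) hA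
  calc _ = φ (∑ j, s j x • v j) := by simp [LinearMap.sum_apply]
    _ = φ x := by rw [hvs]

lemma subsingleton_of_subsingleton_linearMap [IsNoetherianRing R] [Module.Finite R X]
    [Module.Finite R A] [FaithfulSMul R X] (h : Subsingleton (X →ₗ[R] A)) : Subsingleton A := by
  obtain ⟨r, hr, hreg⟩ := IsSMulRegular.subsingleton_linearMap_iff.1 h
  rw [Module.annihilator_eq_bot.2 ‹_›, Ideal.mem_bot] at hr
  exact ⟨fun a b => hreg (by simp [hr])⟩

lemma isSMulRegular_of_isSMulRegular_linearMap [IsNoetherianRing R] [Module.Finite R X]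
    [Module.Finite R A] [FaithfulSMul R X] {r : R} (hr : IsSMulRegular (X →ₗ[R] A) r) :
    IsSMulRegular A r := by
  suffices Subsingleton (LinearMap.ker (LinearMap.lsmul R A r)) from
    LinearMap.ker_eq_bot.1 (Submodule.subsingleton_iff_eq_bot.1 this)
  refine subsingleton_of_subsingleton_linearMap (R := R) (X := X)
    (subsingleton_of_forall_eq 0 fun φ => ?_)
  have : Submodule.subtype _ ∘ₗ φ = 0 :=
    hr (LinearMap.ext fun x => (φ x).2.trans (smul_zero r).symm)
  exact LinearMap.ext fun x => Subtype.ext (LinearMap.congr_fun this x)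

end HomModules

section Depth

open IsLocalRing

variable [IsLocalRing R]

/-- The depth of an unbundled module. -/
abbrev moduleDepth (X : Type u) [AddCommGroup X] [Module R X] : ℕ∞ :=
  rdepth R (ModuleCat.of R X)

variable {R}
variable {A B D X : Type u} [AddCommGroup A] [Module R A] [AddCommGroup B] [Module R B]
  [AddCommGroup D] [Module R D] [AddCommGroup X] [Module R X]

lemma annihilator_residueField : Module.annihilator R (ResidueField R) = maximalIdeal R :=
  Ideal.annihilator_quotient

lemma natCast_le_moduleDepth_iff {s : ℕ} :
    s ≤ moduleDepth R X ↔ ∀ i < s, Subsingleton (ExtMod R (ResidueField R) X i) := by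
  simp only [rdepth, le_sInf_iff, Set.forall_mem_image, Set.mem_ofPred_eq, Nat.cast_le]
  refine forall_congr' fun i => ?_
  rw [subsingleton_extM_iff, not_imp_comm, not_le]

lemma natCast_le_moduleDepth_add_one_iff {s : ℕ} :
    s ≤ moduleDepth R X + 1 ↔ ∀ i, i + 1 < s → Subsingleton (ExtMod R (ResidueField R) X i) := by
  rcases s with _ | s
  · simp
  · rw [Nat.cast_succ, ENat.add_le_add_iff_right ENat.one_ne_top, natCast_le_moduleDepth_iff]
    simp only [Nat.add_lt_add_iff_right]

lemma moduleDepth_congr (e : A ≃ₗ[R] B) : moduleDepth R A = moduleDepth R B := by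
  refine ENat.eq_of_forall_natCast_le_iff fun s => ?_
  simp only [natCast_le_moduleDepth_iff, subsingleton_extMod_congr_right e]

lemma moduleDepth_le_moduleDepth_hom_of_projective {P : Type u} [AddCommGroup P] [Module R P]
    [Module.Finite R P] [Module.Projective R P] : moduleDepth R A ≤ moduleDepth R (P →ₗ[R] A) := by
  refine ENat.forall_natCast_le_iff_le.1 fun s hs => ?_
  rw [natCast_le_moduleDepth_iff] at hs ⊢
  exact fun i hi => subsingleton_extMod_hom_of_projective (hs i hi)

namespace IsShortExact

variable {f : A →ₗ[R] B} {g : B →ₗ[R] D} (h : IsShortExact f g)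
include h

lemma min_le_moduleDepth_middle : min (moduleDepth R A) (moduleDepth R D) ≤ moduleDepth R B := by
  refine ENat.forall_natCast_le_iff_le.1 fun s hs => ?_
  simp only [le_min_iff, natCast_le_moduleDepth_iff] at hs ⊢
  exact fun i hi => h.subsingleton_extMod_middle (hs.1 i hi) (hs.2 i hi)

lemma min_le_moduleDepth_right_add_one :
    min (moduleDepth R A) (moduleDepth R B + 1) ≤ moduleDepth R D + 1 := by
  refine ENat.forall_natCast_le_iff_le.1 fun s hs => ?_
  simp only [le_min_iff, natCast_le_moduleDepth_add_one_iff, natCast_le_moduleDepth_iff] at hs ⊢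
  exact fun i hi => h.subsingleton_extMod_right (hs.2 i hi) (hs.1 (i + 1) hi)

lemma natCast_le_moduleDepth_left {s : ℕ} (hD : s ≤ moduleDepth R D + 1)
    (hf : ∀ i < s, ∀ x : ExtMod R (ResidueField R) A i,
      x.comp (extOfHom R f) (add_zero i) = 0) : s ≤ moduleDepth R A := by
  rw [natCast_le_moduleDepth_add_one_iff] at hD
  refine natCast_le_moduleDepth_iff.2 fun i hi => subsingleton_of_forall_eq 0 fun x => ?_
  rcases i with _ | i
  · exact h.eq_zero_of_comp_extOfHom_eq_zero_of_degree_zero x (hf 0 hi x)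
  · exact h.eq_zero_of_comp_extOfHom_eq_zero (hD i hi) x (hf _ hi x)

lemma min_le_moduleDepth_left : min (moduleDepth R B) (moduleDepth R D + 1) ≤ moduleDepth R A := by
  refine ENat.forall_natCast_le_iff_le.1 fun s hs => ?_
  rw [le_min_iff] at hs
  exact h.natCast_le_moduleDepth_left hs.2 fun i hi _ =>
    (natCast_le_moduleDepth_iff.1 hs.1 i hi).elim _ _

lemma moduleDepth_right_add_one_le_left
    (hf : f ∈ maximalIdeal R • (⊤ : Submodule R (A →ₗ[R] B))) :
    moduleDepth R D + 1 ≤ moduleDepth R A := by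
  refine ENat.forall_natCast_le_iff_le.1 fun s hs => h.natCast_le_moduleDepth_left hs
    fun i _ => comp_extOfHom_eq_zero_of_mem_annihilator_smul_top ?_
  rwa [annihilator_residueField]

lemma moduleDepth_middle_eq_right [Subsingleton A] : moduleDepth R B = moduleDepth R D := by
  have injective : Function.Injective g := by
    rw [← LinearMap.ker_eq_bot, h.exact.linearMap_ker_eq, LinearMap.range_eq_bot]
    exact LinearMap.ext fun x => Subsingleton.elim x 0 ▸ map_zero f
  exact moduleDepth_congr (LinearEquiv.ofBijective g ⟨injective, h.surjective⟩)

lemma moduleDepth_left_eq_middle (hlt : moduleDepth R B < moduleDepth R D) :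
    moduleDepth R A = moduleDepth R B := by
  have left := h.min_le_moduleDepth_left
  have middle := h.min_le_moduleDepth_middle
  rw [min_eq_left (hlt.le.trans le_self_add)] at left
  exact left.antisymm' ((min_le_iff.1 middle).resolve_right hlt.not_ge)

lemma moduleDepth_left_eq_right_add_one_of_right_lt (hlt : moduleDepth R D < moduleDepth R B) :
    moduleDepth R A = moduleDepth R D + 1 := by
  have left := h.min_le_moduleDepth_left
  have right := h.min_le_moduleDepth_right_add_one
  have hlt' : moduleDepth R D + 1 < moduleDepth R B + 1 :=
    (ENat.add_lt_add_iff_right ENat.one_ne_top).2 hlt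
  rw [min_eq_right (Order.add_one_le_of_lt hlt)] at left
  exact left.antisymm' ((min_le_iff.1 right).resolve_right hlt'.not_ge)

lemma moduleDepth_left_eq_right_add_one_of_left_lt (hlt : moduleDepth R A < moduleDepth R B) :
    moduleDepth R A = moduleDepth R D + 1 := by
  have left := h.min_le_moduleDepth_left
  have right := h.min_le_moduleDepth_right_add_one
  rw [min_eq_left (hlt.le.trans le_self_add)] at right
  exact right.antisymm ((min_le_iff.1 left).resolve_left hlt.not_ge)

end IsShortExact

lemma moduleDepth_le_moduleDepth_hom [IsNoetherianRing R] [Module.Finite R X]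
    (hExt : ∀ i, Subsingleton (ExtMod R X A (i + 1))) :
    moduleDepth R A ≤ moduleDepth R (X →ₗ[R] A) := by
  refine ENat.forall_natCast_le_iff_le.1 fun s hs => ?_
  induction s generalizing X with
  | zero => simp
  | succ s ih =>
    obtain ⟨n, g, hg⟩ := Module.Finite.exists_fin' R X
    have h := isShortExact_subtype_ker hg
    have extKer i : Subsingleton (ExtMod R (LinearMap.ker g) A (i + 1)) :=
      (h.extSuccEquiv A i).subsingleton_congr.2 (hExt (i + 1))
    have depthKer := ih extKer (le_trans (by gcongr; simp) hs)
    refine le_trans (le_min (hs.trans moduleDepth_le_moduleDepth_hom_of_projective) ?_)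
      (h.lcomp (hExt 0)).min_le_moduleDepth_left
    push_cast
    gcongr

lemma exists_isSMulRegular_of_one_le_moduleDepth [IsNoetherianRing R] [Module.Finite R A]
    (hA : 1 ≤ moduleDepth R A) : ∃ x ∈ maximalIdeal R, IsSMulRegular A x := by
  have hom := (natCast_le_moduleDepth_iff (s := 1)).1 (by simpa using hA) 0 one_pos
  have := IsSMulRegular.subsingleton_linearMap_iff.1 (subsingleton_extMod_zero_iff.1 hom)
  rwa [annihilator_residueField] at this

lemma moduleDepth_quotient_add_one_le {x : R} (hx : x ∈ maximalIdeal R) (hreg : IsSMulRegular A x) :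
    moduleDepth R (A ⧸ LinearMap.range (LinearMap.lsmul R A x)) + 1 ≤ moduleDepth R A := by
  refine (isShortExact_mkQ (f := LinearMap.lsmul R A x) hreg).moduleDepth_right_add_one_le_left ?_
  exact Submodule.smul_mem_smul hx (Submodule.mem_top (x := LinearMap.id))

lemma moduleDepth_hom_le [IsNoetherianRing R] [Module.Finite R X] [FaithfulSMul R X]
    [Module.Finite R A] (hExt : ∀ i, Subsingleton (ExtMod R X A (i + 1))) :
    moduleDepth R (X →ₗ[R] A) ≤ moduleDepth R A := by
  refine ENat.forall_natCast_le_iff_le.1 fun s hs => ?_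
  induction s generalizing A with
  | zero => simp
  | succ s ih =>
    obtain ⟨x, hx, hreg⟩ := exists_isSMulRegular_of_one_le_moduleDepth
      (le_trans (by simp) hs)
    have h := isShortExact_mkQ (f := LinearMap.lsmul R A x)
      (isSMulRegular_of_isSMulRegular_linearMap hreg)
    have hs' : (s + 1 : ℕ) ≤
        moduleDepth R (X →ₗ[R] A ⧸ LinearMap.range (LinearMap.lsmul R A x)) + 1 :=
      le_trans (le_min hs (hs.trans le_self_add))
        (h.compRight (hExt 0)).min_le_moduleDepth_right_add_one
    push_cast at hs' ⊢
    refine le_trans ?_ (moduleDepth_quotient_add_one_le hx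
      (isSMulRegular_of_isSMulRegular_linearMap hreg))
    gcongr
    exact ih (fun i => h.subsingleton_extMod_right (hExt i) (hExt (i + 1)))
      ((ENat.add_le_add_iff_right ENat.one_ne_top).1 hs')

lemma moduleDepth_hom_eq [IsNoetherianRing R] [Module.Finite R X] [FaithfulSMul R X]
    [Module.Finite R A] (hExt : ∀ i, Subsingleton (ExtMod R X A (i + 1))) :
    moduleDepth R (X →ₗ[R] A) = moduleDepth R A :=
  (moduleDepth_hom_le hExt).antisymm (moduleDepth_le_moduleDepth_hom hExt)

lemma natCast_le_supportDim [IsNoetherianRing R] [Module.Finite R A] [Nontrivial A] {s : ℕ}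
    (hs : s ≤ moduleDepth R A) : s ≤ Module.supportDim R A := by
  have smul_lt : maximalIdeal R • (⊤ : Submodule R A) < ⊤ :=
    (Submodule.top_ne_ideal_smul_of_le_jacobson_annihilator
      (maximalIdeal_le_jacobson _)).symm.lt_top
  obtain ⟨rs, rfl, -, hrs⟩ := ModuleCat.exists_isRegular_of_exists_subsingleton_ext
    (maximalIdeal R) s (ModuleCat.of R A) smul_lt (ModuleCat.of R (ResidueField R))
    (by rw [Module.support_eq_zeroLocus, annihilator_residueField])
    (natCast_le_moduleDepth_iff.1 hs)
  have := hrs.quot_ofList_smul_nontrivial (⊤ : Submodule R A)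
  have quot_nonneg : 0 ≤ Module.supportDim R (A ⧸ Ideal.ofList rs • (⊤ : Submodule R A)) :=
    have := Module.nonempty_support_of_nontrivial (R := R)
      (M := A ⧸ Ideal.ofList rs • (⊤ : Submodule R A)) |>.to_subtype
    Order.krullDim_nonneg
  calc (rs.length : WithBot ℕ∞)
      ≤ Module.supportDim R (A ⧸ Ideal.ofList rs • (⊤ : Submodule R A)) + rs.length :=
        le_add_of_nonneg_left quot_nonneg
    _ = Module.supportDim R A := Module.supportDim_add_length_eq_supportDim_of_isRegular rs hrs

lemma moduleDepth_lt_top [IsNoetherianRing R] [Module.Finite R A] [Nontrivial A] :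
    moduleDepth R A < ⊤ := by
  have supportDim_lt : Module.supportDim R A < ⊤ :=
    (Module.supportDim_le_ringKrullDim R A).trans_lt ringKrullDim_lt_top
  obtain ⟨d, hd⟩ := WithBot.ne_bot_iff_exists.1 (Module.supportDim_ne_bot_of_nontrivial R A)
  have d_lt : d < ⊤ := WithBot.coe_lt_coe.1 (hd ▸ supportDim_lt)
  refine lt_of_le_of_lt (ENat.forall_natCast_le_iff_le.1 fun s hs => ?_) d_lt
  exact WithBot.coe_le_coe.1 (hd ▸ natCast_le_supportDim hs)

end Depth

section ProjectiveDimension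

variable {R}
variable {A B D : Type u} [AddCommGroup A] [Module R A] [AddCommGroup B] [Module R B]
  [AddCommGroup D] [Module R D]

lemma IsShortExact.hasProjectiveDimensionLE_right_iff [Module.Projective R B]
    {f : A →ₗ[R] B} {g : B →ₗ[R] D} (h : IsShortExact f g) {n : ℕ} :
    HasProjectiveDimensionLE (ModuleCat.of R D) (n + 1) ↔
      HasProjectiveDimensionLE (ModuleCat.of R A) n :=
  h.shortExact.hasProjectiveDimensionLT_X₃_iff n ((IsProjective.iff_projective B).1 inferInstance)

lemma hasProjectiveDimensionLE_zero_iff :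
    HasProjectiveDimensionLE (ModuleCat.of R A) 0 ↔ Module.Projective R A :=
  (projective_iff_hasProjectiveDimensionLE_zero _).symm.trans (IsProjective.iff_projective A).symm

lemma pdimLE.hasProjectiveDimensionLE {n : ℕ} {M : ModuleCat.{u} R} (h : pdimLE R n M) :
    HasProjectiveDimensionLE M n := by
  induction n generalizing M with
  | zero => exact hasProjectiveDimensionLE_zero_iff.2 h
  | succ n ih =>
    obtain ⟨X, K, f, g, hf, hg, hfg, hX, hK⟩ := h
    have h : IsShortExact f g := ⟨hf, LinearMap.exact_iff.2 hfg, hg⟩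
    exact h.hasProjectiveDimensionLE_right_iff.2 (ih hK)

lemma exists_hasProjectiveDimensionLE_of_pdim_ne_top {M : ModuleCat.{u} R} (h : pdim R M ≠ ⊤) :
    ∃ n, HasProjectiveDimensionLE M n := by
  obtain ⟨_, ⟨n, hn, rfl⟩, -⟩ := sInf_lt_iff.1 (lt_top_iff_ne_top.2 h)
  exact ⟨n, pdimLE.hasProjectiveDimensionLE hn⟩

end ProjectiveDimension

section Semidualizing

variable {R}
variable {C : Type u} [AddCommGroup C] [Module R C]

namespace IsSemidualizing

variable (hC : IsSemidualizing R (ModuleCat.of R C))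
include hC

lemma finite : Module.Finite R C := hC.1

lemma faithfulSMul : FaithfulSMul R C :=
  ⟨fun h => hC.2.1.1 (LinearMap.ext h)⟩

lemma subsingleton_extMod (i : ℕ) : Subsingleton (ExtMod R C C (i + 1)) :=
  subsingleton_extM_iff.1 (hC.2.2 (i + 1) i.succ_pos)

/-- The homothety isomorphism. -/
def homothetyEquiv : R ≃ₗ[R] (C →ₗ[R] C) :=
  LinearEquiv.ofBijective (LinearMap.lsmul R C) hC.2.1

lemma exists_forall_apply_eq_smul (φ : C →ₗ[R] C) : ∃ r : R, ∀ c, φ c = r • c := by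
  obtain ⟨r, rfl⟩ := hC.homothetyEquiv.surjective φ
  exact ⟨r, fun _ => rfl⟩

end IsSemidualizing

end Semidualizing

section AuslanderClass

variable {A B D P N C : Type u} [AddCommGroup A] [Module R A] [AddCommGroup B] [Module R B]
  [AddCommGroup D] [Module R D] [AddCommGroup P] [Module R P] [AddCommGroup N] [Module R N]
  [AddCommGroup C] [Module R C]

/-- The conditions of the Auslander class of `C` on `N` that govern the depth of `N ⊗ C`. The
vanishing of `Tor(N, C)` is left out, which avoids long exact `Tor` sequences. -/
structure IsWeaklyAuslander (C N : Type u) [AddCommGroup C] [Module R C] [AddCommGroup N]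
    [Module R N] : Prop where
  bijective_mk : Function.Bijective (TensorProduct.mk R N C)
  subsingleton_ext (i : ℕ) : Subsingleton (ExtMod R C (N ⊗[R] C) (i + 1))

variable {R}

lemma isWeaklyAuslander_of_projective (hC : IsSemidualizing R (ModuleCat.of R C))
    [Module.Finite R P] [Module.Projective R P] : IsWeaklyAuslander R C P := by
  obtain ⟨n, v, s, hvs⟩ := exists_sum_smul_eq_of_projective R P
  let coord (j : Fin n) : P ⊗[R] C →ₗ[R] C := TensorProduct.lid R C ∘ₗ (s j).rTensor C
  have coord_mk (j : Fin n) (x : P) (c : C) : coord j (x ⊗ₜ c) = s j x • c := rfl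
  have sum_coord : ∑ j, TensorProduct.mk R P C (v j) ∘ₗ coord j = LinearMap.id := by
    refine TensorProduct.ext' fun x c => ?_
    simp only [LinearMap.sum_apply, LinearMap.comp_apply, coord_mk, TensorProduct.mk_apply,
      ← TensorProduct.smul_tmul, ← TensorProduct.sum_tmul, hvs, LinearMap.id_apply]
  refine ⟨⟨fun x y hxy => ?_, fun φ => ?_⟩, fun i => subsingleton_extMod_of_sum_comp_eq_id
    coord (fun j => TensorProduct.mk R P C (v j)) sum_coord (hC.subsingleton_extMod i)⟩
  · have := hC.faithfulSMul
    have coord_eq (j : Fin n) : s j x = s j y := FaithfulSMul.eq_of_smul_eq_smul fun c : C => by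
      rw [← coord_mk, ← coord_mk]
      exact congrArg (coord j) (LinearMap.congr_fun hxy c)
    rw [← hvs x, ← hvs y]
    simp only [coord_eq]
  · choose r hr using fun j => hC.exists_forall_apply_eq_smul (coord j ∘ₗ φ)
    refine ⟨∑ j, r j • v j, LinearMap.ext fun c => ?_⟩
    calc (∑ j, r j • v j) ⊗ₜ c = ∑ j, v j ⊗ₜ coord j (φ c) := by
          simp only [TensorProduct.sum_tmul, TensorProduct.smul_tmul]
          exact Finset.sum_congr rfl fun j _ => congrArg _ (hr j c).symm
      _ = φ c := by simpa using LinearMap.congr_fun sum_coord (φ c)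

namespace IsWeaklyAuslander

lemma injective_rTensor [IsNoetherianRing R] (hC : IsSemidualizing R (ModuleCat.of R C))
    [Module.Finite R A] (hA : IsWeaklyAuslander R C A) (hB : IsWeaklyAuslander R C B)
    {f : A →ₗ[R] B} (hf : Function.Injective f) : Function.Injective (f.rTensor C) := by
  have := hC.finite
  have := hC.faithfulSMul
  suffices Subsingleton (LinearMap.ker (f.rTensor C)) from
    LinearMap.ker_eq_bot.1 (Submodule.subsingleton_iff_eq_bot.1 this)
  refine subsingleton_of_subsingleton_linearMap (R := R) (X := C)
    (subsingleton_of_forall_eq 0 fun φ => ?_)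
  obtain ⟨a, ha⟩ := hA.bijective_mk.2 (Submodule.subtype _ ∘ₗ φ)
  have a_tmul (c : C) : a ⊗ₜ c = (φ c : A ⊗[R] C) := LinearMap.congr_fun ha c
  have mk_fa : TensorProduct.mk R B C (f a) = 0 := LinearMap.ext fun c => by
    have := LinearMap.mem_ker.1 (φ c).2
    rwa [← a_tmul] at this
  have a_eq_zero : a = 0 := hf (hB.bijective_mk.1 (by rw [mk_fa, map_zero, map_zero]))
  exact LinearMap.ext fun c => Subtype.ext (by rw [← a_tmul, a_eq_zero]; simp)

lemma right [IsNoetherianRing R] (hC : IsSemidualizing R (ModuleCat.of R C)) [Module.Finite R A]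
    {f : A →ₗ[R] B} {g : B →ₗ[R] D} (h : IsShortExact f g)
    (hA : IsWeaklyAuslander R C A) (hB : IsWeaklyAuslander R C B) : IsWeaklyAuslander R C D := by
  have tensor : IsShortExact (f.rTensor C) (g.rTensor C) :=
    ⟨hA.injective_rTensor hC hB h.injective, rTensor_exact C h.exact h.surjective,
      LinearMap.rTensor_surjective C h.surjective⟩
  have homTensor := tensor.compRight (hA.subsingleton_ext 0)
  refine ⟨?_, fun i =>
    tensor.subsingleton_extMod_right (hB.subsingleton_ext i) (hA.subsingleton_ext (i + 1))⟩
  exact LinearMap.bijective_of_surjective_of_bijective_of_right_exact f g _ _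
    (TensorProduct.mk R A C) (TensorProduct.mk R B C) (TensorProduct.mk R D C)
    (by ext; rfl) (by ext; rfl) h.exact homTensor.exact hA.bijective_mk.2 hB.bijective_mk
    h.surjective homTensor.surjective

end IsWeaklyAuslander

lemma isWeaklyAuslander_of_hasProjectiveDimensionLE [IsNoetherianRing R]
    (hC : IsSemidualizing R (ModuleCat.of R C)) [Module.Finite R N] {n : ℕ}
    (hN : HasProjectiveDimensionLE (ModuleCat.of R N) n) : IsWeaklyAuslander R C N := by
  induction n generalizing N with
  | zero =>
    have := hasProjectiveDimensionLE_zero_iff.1 hN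
    exact isWeaklyAuslander_of_projective hC
  | succ n ih =>
    obtain ⟨k, g, hg⟩ := Module.Finite.exists_fin' R N
    have h := isShortExact_subtype_ker hg
    exact .right hC h (ih (h.hasProjectiveDimensionLE_right_iff.1 hN))
      (isWeaklyAuslander_of_projective hC)

lemma moduleDepth_eq_of_isSemidualizing [IsLocalRing R] [IsNoetherianRing R]
    (hC : IsSemidualizing R (ModuleCat.of R C)) : moduleDepth R C = moduleDepth R R := by
  have := hC.finite
  have := hC.faithfulSMul
  rw [moduleDepth_congr hC.homothetyEquiv, moduleDepth_hom_eq hC.subsingleton_extMod]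

lemma moduleDepth_tensorProduct_eq [IsLocalRing R] [IsNoetherianRing R]
    (hC : IsSemidualizing R (ModuleCat.of R C)) [Module.Finite R N] {n : ℕ}
    (hN : HasProjectiveDimensionLE (ModuleCat.of R N) n) :
    moduleDepth R (N ⊗[R] C) = moduleDepth R N := by
  have := hC.finite
  have := hC.faithfulSMul
  have auslander := isWeaklyAuslander_of_hasProjectiveDimensionLE hC hN
  exact (moduleDepth_hom_eq auslander.subsingleton_ext).symm.trans
    (moduleDepth_congr (LinearEquiv.ofBijective _ auslander.bijective_mk)).symm

end AuslanderClass

section FreeOfDepth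

open IsLocalRing

variable {R}
variable {F N P : Type u} [AddCommGroup F] [Module R F] [AddCommGroup N] [Module R N]
  [AddCommGroup P] [Module R P]

lemma mem_smul_top_of_forall_apply_mem [Module.Finite R P] [Module.Projective R P] {I : Ideal R}
    {f : P →ₗ[R] F} (hf : ∀ x, f x ∈ I • (⊤ : Submodule R F)) :
    f ∈ I • (⊤ : Submodule R (P →ₗ[R] F)) := by
  obtain ⟨n, v, s, hvs⟩ := exists_sum_smul_eq_of_projective R P
  have f_eq : f = ∑ j, LinearMap.smulRightₗ (s j) (f (v j)) := LinearMap.ext fun x => by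
    calc f x = f (∑ j, s j x • v j) := by rw [hvs]
      _ = _ := by simp [LinearMap.sum_apply]
  rw [f_eq]
  refine Submodule.sum_mem _ fun j _ => ?_
  have mem_map := Submodule.mem_map_of_mem (f := LinearMap.smulRightₗ (s j)) (hf (v j))
  rw [Submodule.map_smul''] at mem_map
  exact Submodule.smul_mono le_rfl le_top mem_map

variable [IsLocalRing R]

lemma moduleDepth_self_le_of_projective [Module.Finite R P] [Module.Projective R P] :
    moduleDepth R R ≤ moduleDepth R P := by
  obtain ⟨n, v, s, hvs⟩ := exists_sum_smul_eq_of_projective R P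
  refine ENat.forall_natCast_le_iff_le.1 fun k hk => ?_
  rw [natCast_le_moduleDepth_iff] at hk ⊢
  refine fun i hi => subsingleton_extMod_of_sum_comp_eq_id s
    (fun j => LinearMap.toSpanSingleton R P (v j)) (LinearMap.ext fun x => ?_) (hk i hi)
  simpa [LinearMap.sum_apply] using hvs x

lemma moduleDepth_le_self_of_free [Module.Free R F] [Nontrivial F] :
    moduleDepth R F ≤ moduleDepth R R := by
  let b := Module.Free.chooseBasis R F
  let j : Module.Free.ChooseBasisIndex R F := Classical.arbitrary _
  refine ENat.forall_natCast_le_iff_le.1 fun k hk => ?_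
  rw [natCast_le_moduleDepth_iff] at hk ⊢
  refine fun i hi => subsingleton_extMod_of_sum_comp_eq_id (ι := Unit)
    (fun _ => LinearMap.toSpanSingleton R F (b j)) (fun _ => b.coord j) ?_ (hk i hi)
  exact LinearMap.ext_ring (by simp)

variable (R N) in
lemma exists_surjective_ker_le_maximalIdeal_smul_top [Module.Finite R N] :
    ∃ (n : ℕ) (g : (Fin n → R) →ₗ[R] N), Function.Surjective g ∧
      LinearMap.ker g ≤ maximalIdeal R • ⊤ := by
  let b := Module.finBasis (ResidueField R) (ResidueField R ⊗[R] N)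
  choose v hv using fun i => TensorProduct.mk_surjective R N (ResidueField R)
    residue_surjective (b i)
  refine ⟨_, Fintype.linearCombination R v, ?_, fun a ha => ?_⟩
  · rw [← LinearMap.range_eq_top, Fintype.range_linearCombination]
    exact span_eq_top_of_tmul_eq_basis v b hv
  · have sum_residue : ∑ i, residue R (a i) • b i = 0 := by
      calc ∑ i, residue R (a i) • b i = 1 ⊗ₜ Fintype.linearCombination R v a := by
            simp only [← hv, Fintype.linearCombination_apply, TensorProduct.tmul_sum,
              TensorProduct.tmul_smul]
            rfl
        _ = 0 := by rw [LinearMap.mem_ker.1 ha, TensorProduct.tmul_zero]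
    have coeff_mem i : a i ∈ maximalIdeal R :=
      (residue_eq_zero_iff _).1
        (Fintype.linearIndependent_iff.1 b.linearIndependent _ sum_residue i)
    rw [pi_eq_sum_univ' a]
    exact Submodule.sum_mem _ fun i _ => Submodule.smul_mem_smul (coeff_mem i) Submodule.mem_top

lemma free_of_moduleDepth_self_le [IsNoetherianRing R] [Module.Finite R N] {n : ℕ}
    (hpd : HasProjectiveDimensionLE (ModuleCat.of R N) n)
    (hdepth : moduleDepth R R ≤ moduleDepth R N) : Module.Free R N := by
  induction n generalizing N with
  | zero =>
    have := hasProjectiveDimensionLE_zero_iff.1 hpd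
    exact Module.free_of_flat_of_isLocalRing
  | succ n ih =>
    obtain ⟨k, g, hg, hker⟩ := exists_surjective_ker_le_maximalIdeal_smul_top R N
    have h := isShortExact_subtype_ker hg
    have le_depth_cover_and_target :
        moduleDepth R R ≤ min (moduleDepth R (Fin k → R)) (moduleDepth R N + 1) :=
      le_min moduleDepth_self_le_of_projective (hdepth.trans le_self_add)
    have free_ker : Module.Free R (LinearMap.ker g) :=
      ih (h.hasProjectiveDimensionLE_right_iff.1 hpd) (le_depth_cover_and_target.trans
        h.min_le_moduleDepth_left)
    have depth_ne_top : moduleDepth R R ≠ ⊤ := moduleDepth_lt_top.ne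
    have depth_lt : moduleDepth R R < moduleDepth R (LinearMap.ker g) :=
      calc moduleDepth R R < moduleDepth R N + 1 := (ENat.lt_add_one_iff' depth_ne_top).2 hdepth
        _ ≤ moduleDepth R (LinearMap.ker g) := h.moduleDepth_right_add_one_le_left
          (mem_smul_top_of_forall_apply_mem fun x => hker x.2)
    have subsingleton_ker : Subsingleton (LinearMap.ker g) := by
      rw [← not_nontrivial_iff_subsingleton]
      exact fun _ => depth_lt.not_ge moduleDepth_le_self_of_free
    exact Module.Free.of_equiv (LinearEquiv.ofBijective g
      ⟨LinearMap.ker_eq_bot.1 (Submodule.subsingleton_iff_eq_bot.1 subsingleton_ker), hg⟩)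

end FreeOfDepth

section DualCokernel

variable {R}
variable {P₁ P₀ N : Type u} [AddCommGroup P₁] [Module R P₁] [AddCommGroup P₀] [Module R P₀]
  [AddCommGroup N] [Module R N]

/-- The cokernel of `Hom(d, Y)`. If `d` is a presentation of `M` by finite projective modules, this
is the transpose of `M` with respect to `Y`. -/
abbrev DualCoker (d : P₁ →ₗ[R] P₀) (Y : Type u) [AddCommGroup Y] [Module R Y] : Type u :=
  (P₁ →ₗ[R] Y) ⧸ LinearMap.range (LinearMap.lcomp R Y d)

lemma exists_comp_comp_eq_self_of_projective_quotient_range [Module.Projective R P₀]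
    (d : P₁ →ₗ[R] P₀) [Module.Projective R (P₀ ⧸ LinearMap.range d)] :
    ∃ k : P₀ →ₗ[R] P₁, d ∘ₗ k ∘ₗ d = d := by
  obtain ⟨s, hs⟩ := Module.projective_lifting_property (LinearMap.range d).mkQ LinearMap.id
    (Submodule.mkQ_surjective _)
  have mem_range (y : P₀) : y - s ((LinearMap.range d).mkQ y) ∈ LinearMap.range d := by
    rw [← Submodule.Quotient.mk_eq_zero, Submodule.Quotient.mk_sub, sub_eq_zero]
    exact (LinearMap.congr_fun hs _).symm
  obtain ⟨k, hk⟩ := Module.projective_lifting_property d.rangeRestrict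
    ((LinearMap.id - s ∘ₗ (LinearMap.range d).mkQ).codRestrict _ mem_range)
    d.surjective_rangeRestrict
  refine ⟨k, LinearMap.ext fun x => ?_⟩
  have d_mkQ : (LinearMap.range d).mkQ (d x) = 0 :=
    (Submodule.Quotient.mk_eq_zero _).2 (LinearMap.mem_range_self d x)
  calc d (k (d x)) = d x - s ((LinearMap.range d).mkQ (d x)) :=
        congrArg Subtype.val (LinearMap.congr_fun hk (d x))
    _ = d x := by rw [d_mkQ, map_zero, sub_zero]

lemma projective_of_comp_comp_eq_self [Module.Projective R P₀] {d : P₁ →ₗ[R] P₀} {e : P₀ →ₗ[R] N}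
    (hde : Function.Exact d e) (he : Function.Surjective e) {k : P₀ →ₗ[R] P₁}
    (hk : d ∘ₗ k ∘ₗ d = d) : Module.Projective R N := by
  have ker_le : LinearMap.ker e ≤ LinearMap.ker (LinearMap.id - d ∘ₗ k) := by
    rw [hde.linearMap_ker_eq]
    rintro _ ⟨x, rfl⟩
    exact sub_eq_zero.2 (LinearMap.congr_fun hk x).symm
  let σ : N →ₗ[R] P₀ :=
    (LinearMap.ker e).liftQ _ ker_le ∘ₗ (e.quotKerEquivOfSurjective he).symm
  have σ_e (y : P₀) : σ (e y) = y - d (k y) :=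
    congrArg _ ((e.quotKerEquivOfSurjective he).symm_apply_apply (Submodule.Quotient.mk y))
  refine Module.Projective.of_split σ e (LinearMap.ext fun z => ?_)
  obtain ⟨y, rfl⟩ := he z
  calc e (σ (e y)) = e y - e (d (k y)) := by rw [σ_e, map_sub]
    _ = e y := by rw [hde.apply_apply_eq_zero, sub_zero]

lemma projective_of_projective_dualCoker [Module.Finite R P₁] [Module.Projective R P₁]
    [Module.Finite R P₀] [Module.Projective R P₀] {d : P₁ →ₗ[R] P₀} {e : P₀ →ₗ[R] N}
    (hde : Function.Exact d e) (he : Function.Surjective e)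
    [Module.Projective R (DualCoker d R)] : Module.Projective R N := by
  obtain ⟨k, hk⟩ := exists_comp_comp_eq_self_of_projective_quotient_range (LinearMap.lcomp R R d)
  have eval_symm (x : Module.Dual R (Module.Dual R P₁)) (φ : Module.Dual R P₁) :
      φ ((Module.evalEquiv R P₁).symm x) = x φ := Module.apply_evalEquiv_symm_apply R P₁ φ x
  refine projective_of_comp_comp_eq_self hde he (k := (Module.evalEquiv R P₁).symm ∘ₗ
    LinearMap.lcomp R R k ∘ₗ Module.Dual.eval R P₀) (LinearMap.ext fun x => ?_)
  refine (Module.evalEquiv R P₀).injective (LinearMap.ext fun φ => ?_)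
  calc φ (d ((Module.evalEquiv R P₁).symm (LinearMap.lcomp R R k (Module.Dual.eval R P₀ (d x)))))
      = k (φ ∘ₗ d) (d x) := eval_symm _ (φ ∘ₗ d)
    _ = φ (d x) := LinearMap.congr_fun (LinearMap.congr_fun hk φ) x

end DualCokernel

section DualCokernelSequences

variable {R}
variable {A B D K P₂ P₁ P₀ N Y : Type u} [AddCommGroup A] [Module R A] [AddCommGroup B]
  [Module R B] [AddCommGroup D] [Module R D] [AddCommGroup K] [Module R K] [AddCommGroup P₂]
  [Module R P₂] [AddCommGroup P₁] [Module R P₁] [AddCommGroup P₀] [Module R P₀]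
  [AddCommGroup N] [Module R N] [AddCommGroup Y] [Module R Y]

lemma isShortExact_liftQ_mkQ {f : A →ₗ[R] B} {g : B →ₗ[R] D} (h : Function.Exact f g) :
    IsShortExact ((LinearMap.range f).liftQ g h.linearMap_ker_eq.ge)
      (LinearMap.range g).mkQ where
  injective := LinearMap.ker_eq_bot.1 (Submodule.ker_liftQ_eq_bot _ _ _ h.linearMap_ker_eq.le)
  exact := by
    rw [LinearMap.exact_iff, Submodule.range_liftQ, Submodule.ker_mkQ]
  surjective := Submodule.mkQ_surjective _

lemma isShortExact_mapQ_factor (f : A →ₗ[R] B) {g : B →ₗ[R] D} (hg : Function.Injective g) :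
    IsShortExact
      ((LinearMap.range f).mapQ (LinearMap.range (g ∘ₗ f)) g
        (by rw [← Submodule.map_le_iff_le_comap, LinearMap.range_comp]))
      (Submodule.factor (LinearMap.range_comp_le_range f g)) where
  injective := by
    rw [← LinearMap.ker_eq_bot, Submodule.ker_mapQ, LinearMap.range_comp,
      Submodule.comap_map_eq_of_injective hg, Submodule.mkQ_map_self]
  exact := by
    rw [LinearMap.exact_iff, Submodule.ker_mapQ, Submodule.range_mapQ]
    rfl
  surjective := Submodule.factor_surjective _

lemma lcomp_comp (ι : K →ₗ[R] P₀) (d : P₁ →ₗ[R] K) :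
    LinearMap.lcomp R Y (ι ∘ₗ d) = LinearMap.lcomp R Y d ∘ₗ LinearMap.lcomp R Y ι := rfl

variable (Y) in
lemma exists_isShortExact_dualCoker_comp (ι : K →ₗ[R] P₀) {d : P₁ →ₗ[R] K}
    (hd : Function.Surjective d) :
    ∃ (f : DualCoker ι Y →ₗ[R] DualCoker (ι ∘ₗ d) Y)
      (g : DualCoker (ι ∘ₗ d) Y →ₗ[R] DualCoker d Y), IsShortExact f g := by
  unfold DualCoker
  rw [lcomp_comp]
  exact ⟨_, _, isShortExact_mapQ_factor _ (LinearMap.lcomp_injective_of_surjective d hd)⟩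

variable (Y) in
lemma exists_isShortExact_dualCoker_hom_dualCoker {d' : P₂ →ₗ[R] P₁} {d : P₁ →ₗ[R] K}
    (hd'd : Function.Exact d' d) (hd : Function.Surjective d) :
    ∃ (f : DualCoker d Y →ₗ[R] P₂ →ₗ[R] Y) (g : (P₂ →ₗ[R] Y) →ₗ[R] DualCoker d' Y),
      IsShortExact f g :=
  ⟨_, _, isShortExact_liftQ_mkQ (LinearMap.exact_lcomp_of_exact_of_surjective Y hd'd hd)⟩

section Depth

variable [IsLocalRing R]

lemma moduleDepth_dualCoker_comp_eq_add_one [Module.Finite R P₂] [Module.Projective R P₂]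
    [Module.Projective R P₀] {ι : K →ₗ[R] P₀} {e : P₀ →ₗ[R] N} (h : IsShortExact ι e)
    {d' : P₂ →ₗ[R] P₁} {d : P₁ →ₗ[R] K} (hd'd : Function.Exact d' d)
    (hd : Function.Surjective d) (hExt : Subsingleton (ExtMod R N Y 1))
    (hlt : moduleDepth R (DualCoker (ι ∘ₗ d) Y) < moduleDepth R Y) :
    moduleDepth R (DualCoker (ι ∘ₗ d) Y) = moduleDepth R (DualCoker d' Y) + 1 := by
  obtain ⟨f, g, hfg⟩ := exists_isShortExact_dualCoker_comp Y ι hd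
  obtain ⟨f', g', hfg'⟩ := exists_isShortExact_dualCoker_hom_dualCoker Y hd'd hd
  have : Subsingleton (DualCoker ι Y) :=
    (h.quotRangeLcompEquiv (subsingleton_extMod_of_projective 0)).subsingleton_congr.2 hExt
  rw [hfg.moduleDepth_middle_eq_right] at hlt ⊢
  exact hfg'.moduleDepth_left_eq_right_add_one_of_left_lt
    (hlt.trans_le moduleDepth_le_moduleDepth_hom_of_projective)

variable [IsNoetherianRing R]

lemma moduleDepth_le_moduleDepth_dualCoker [Module.Finite R P₁] [Module.Projective R P₁]
    {d : P₁ →ₗ[R] K} (hd : Function.Surjective d)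
    (hExt : ∀ i, Subsingleton (ExtMod R K Y (i + 1))) :
    moduleDepth R Y ≤ moduleDepth R (DualCoker d Y) := by
  have h := isShortExact_subtype_ker hd
  have subsingleton_ext_ker i : Subsingleton (ExtMod R (LinearMap.ker d) Y (i + 1)) :=
    (h.extSuccEquiv Y i).subsingleton_congr.2 (hExt (i + 1))
  have hHom := h.lcomp (hExt 0)
  calc moduleDepth R Y ≤ moduleDepth R (LinearMap.ker d →ₗ[R] Y) :=
        moduleDepth_le_moduleDepth_hom subsingleton_ext_ker
    _ = moduleDepth R (DualCoker d Y) :=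
        (moduleDepth_congr (hHom.exact.linearEquivOfSurjective hHom.surjective)).symm

lemma moduleDepth_dualCoker_comp_eq_ext_one [Module.Finite R P₁] [Module.Projective R P₁]
    [Module.Projective R P₀] {ι : K →ₗ[R] P₀} {e : P₀ →ₗ[R] N} (h : IsShortExact ι e)
    {d : P₁ →ₗ[R] K} (hd : Function.Surjective d)
    (hExt : ∀ i, Subsingleton (ExtMod R N Y (i + 2)))
    (hlt : moduleDepth R (DualCoker (ι ∘ₗ d) Y) < moduleDepth R Y) :
    moduleDepth R (DualCoker (ι ∘ₗ d) Y) = moduleDepth R (ExtMod R N Y 1) := by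
  obtain ⟨f, g, hfg⟩ := exists_isShortExact_dualCoker_comp Y ι hd
  have depth_le : moduleDepth R Y ≤ moduleDepth R (DualCoker d Y) :=
    moduleDepth_le_moduleDepth_dualCoker hd fun i =>
      (h.extSuccEquiv Y i).subsingleton_congr.2 (hExt i)
  rw [← hfg.moduleDepth_left_eq_middle (hlt.trans_le depth_le)]
  exact moduleDepth_congr (h.quotRangeLcompEquiv (subsingleton_extMod_of_projective 0))

theorem moduleDepth_dualCoker_comp_eq [Module.Finite R P₁] [Module.Projective R P₁]
    [Module.Projective R P₀] {ι : K →ₗ[R] P₀} {e : P₀ →ₗ[R] N} (h : IsShortExact ι e)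
    {d : P₁ →ₗ[R] K} (hd : Function.Surjective d) {n : ℕ}
    (hExt : ∀ i ≠ n, Subsingleton (ExtMod R N Y (i + 1)))
    (hlt : moduleDepth R (DualCoker (ι ∘ₗ d) Y) < moduleDepth R Y) :
    moduleDepth R (DualCoker (ι ∘ₗ d) Y) = moduleDepth R (ExtMod R N Y (n + 1)) + n := by
  induction n generalizing P₁ P₀ K N with
  | zero =>
    rw [Nat.cast_zero, add_zero]
    exact moduleDepth_dualCoker_comp_eq_ext_one h hd (fun i => hExt _ i.succ_ne_zero) hlt
  | succ n ih =>
    obtain ⟨m, d', hd'⟩ := Module.Finite.exists_fin' R (LinearMap.ker d)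
    have exact_d : Function.Exact ((LinearMap.ker d).subtype ∘ₗ d') d := by
      rw [LinearMap.exact_iff, LinearMap.range_comp, LinearMap.range_eq_top.2 hd',
        Submodule.map_subtype_top]
    have depth_eq :=
      moduleDepth_dualCoker_comp_eq_add_one h exact_d hd (hExt 0 n.succ_ne_zero.symm) hlt
    have hExt_K (i : ℕ) (hi : i ≠ n) : Subsingleton (ExtMod R K Y (i + 1)) :=
      (h.extSuccEquiv Y i).subsingleton_congr.2 (hExt (i + 1) (by simpa using hi))
    rw [depth_eq, ih (isShortExact_subtype_ker hd) hd' hExt_K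
      (lt_of_le_of_lt (depth_eq ▸ le_self_add) hlt), moduleDepth_congr (h.extSuccEquiv Y n),
      Nat.cast_succ, add_assoc]

theorem moduleDepth_dualCoker_eq [Module.Finite R P₁] [Module.Projective R P₁]
    [Module.Projective R P₀] {d : P₁ →ₗ[R] P₀} {e : P₀ →ₗ[R] N} (hde : Function.Exact d e)
    (he : Function.Surjective e) {n : ℕ}
    (hExt : ∀ i ≠ n, Subsingleton (ExtMod R N Y (i + 1)))
    (hlt : moduleDepth R (DualCoker d Y) < moduleDepth R Y) :
    moduleDepth R (DualCoker d Y) = moduleDepth R (ExtMod R N Y (n + 1)) + n := by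
  let dToKer := d.codRestrict (LinearMap.ker e) hde.apply_apply_eq_zero
  have dToKer_surjective : Function.Surjective dToKer := fun ⟨y, hy⟩ => by
    obtain ⟨x, rfl⟩ := (hde y).1 hy
    exact ⟨x, rfl⟩
  exact moduleDepth_dualCoker_comp_eq (isShortExact_subtype_ker he) dToKer_surjective hExt hlt

end Depth

end DualCokernelSequences

section TransposeDepth

variable {R}
variable {P₁ P₀ N C : Type u} [AddCommGroup P₁] [Module R P₁] [AddCommGroup P₀] [Module R P₀]
  [AddCommGroup N] [Module R N] [AddCommGroup C] [Module R C]
  [Module.Finite R P₀] [Module.Projective R P₀]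
  {d : P₁ →ₗ[R] P₀} {e : P₀ →ₗ[R] N}

lemma map_dualTensorHom_range_rTensor (d : P₁ →ₗ[R] P₀) :
    (LinearMap.range ((LinearMap.lcomp R R d).rTensor C)).map (dualTensorHom R P₁ C) =
      LinearMap.range (LinearMap.lcomp R C d) := by
  have natural : dualTensorHom R P₁ C ∘ₗ (LinearMap.lcomp R R d).rTensor C =
      LinearMap.lcomp R C d ∘ₗ dualTensorHom R P₀ C := TensorProduct.ext' fun _ _ => rfl
  rw [← LinearMap.range_comp, natural]
  exact LinearMap.range_comp_of_range_eq_top _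
    (LinearMap.range_eq_top.2 dualTensorHom_bijective.surjective)

variable [Module.Finite R P₁] [Module.Projective R P₁]

lemma hasProjectiveDimensionLE_dualCoker (hde : Function.Exact d e) (he : Function.Surjective e)
    {n : ℕ} (hpd : HasProjectiveDimensionLE (ModuleCat.of R (N →ₗ[R] R)) n) :
    HasProjectiveDimensionLE (ModuleCat.of R (DualCoker d R)) (n + 2) := by
  have image_sequence := isShortExact_mkQ (f := LinearMap.lcomp R R e)
    (LinearMap.lcomp_injective_of_surjective e he)
  have cokernel_sequence :=
    isShortExact_liftQ_mkQ (LinearMap.exact_lcomp_of_exact_of_surjective R hde he)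
  have dual_projective (P : Type u) [AddCommGroup P] [Module R P] [Module.Finite R P]
      [Module.Projective R P] : Module.Projective R (P →ₗ[R] R) :=
    inferInstanceAs (Module.Projective R (Module.Dual R P))
  exact cokernel_sequence.hasProjectiveDimensionLE_right_iff.2
    (image_sequence.hasProjectiveDimensionLE_right_iff.2 hpd)

variable (C) in
/-- Tensoring the cokernel of `Hom(d, R)` with `C` gives the cokernel of `Hom(d, C)`. -/
def dualCokerTensorEquiv (d : P₁ →ₗ[R] P₀) : DualCoker d R ⊗[R] C ≃ₗ[R] DualCoker d C :=
  have h := rTensor_exact C (LinearMap.exact_map_mkQ_range (LinearMap.lcomp R R d))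
    (Submodule.mkQ_surjective _)
  (h.linearEquivOfSurjective (LinearMap.rTensor_surjective C (Submodule.mkQ_surjective _))).symm ≪≫ₗ
    Submodule.Quotient.equiv _ _ (dualTensorHomEquiv R P₁ C) (map_dualTensorHom_range_rTensor d)

variable [IsLocalRing R] [IsNoetherianRing R]

lemma moduleDepth_dualCoker_eq_of_isSemidualizing (hC : IsSemidualizing R (ModuleCat.of R C))
    {n : ℕ} (hpd : HasProjectiveDimensionLE (ModuleCat.of R (DualCoker d R)) n) :
    moduleDepth R (DualCoker d C) = moduleDepth R (DualCoker d R) := by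
  rw [← moduleDepth_tensorProduct_eq hC hpd, moduleDepth_congr (dualCokerTensorEquiv C d)]

lemma moduleDepth_dualCoker_lt (hde : Function.Exact d e) (he : Function.Surjective e)
    (hN : ¬ Module.Projective R N) {n : ℕ}
    (hpd : HasProjectiveDimensionLE (ModuleCat.of R (DualCoker d R)) n) :
    moduleDepth R (DualCoker d R) < moduleDepth R R := by
  by_contra! hle
  have := free_of_moduleDepth_self_le hpd hle
  exact hN (projective_of_projective_dualCoker hde he)

lemma free_iff_moduleDepth_eq [Module.Finite R N] {n : ℕ}
    (hpd : HasProjectiveDimensionLE (ModuleCat.of R N) n)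
    (hdepth : moduleDepth R N ≤ moduleDepth R R) :
    Module.Free R N ↔ moduleDepth R N = moduleDepth R R :=
  ⟨fun _ => hdepth.antisymm moduleDepth_self_le_of_projective,
    fun h => free_of_moduleDepth_self_le hpd h.ge⟩

end TransposeDepth

section Linkage

variable {R} {C M L : ModuleCat.{u} R}

lemma IsLambda.exists_presentation (h : IsLambda R M L) :
    ∃ (P₁ P₀ Q : ModuleCat.{u} R) (d : P₁ →ₗ[R] P₀) (e : P₀ →ₗ[R] M) (π : Q →ₗ[R] DualCoker d R),
      (Module.Finite R P₁ ∧ Module.Projective R P₁) ∧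
      (Module.Finite R P₀ ∧ Module.Projective R P₀) ∧
      (Module.Finite R Q ∧ Module.Projective R Q) ∧
      Function.Exact d e ∧ Function.Surjective e ∧ Function.Surjective π ∧
      Nonempty (L ≃ₗ[R] LinearMap.ker π) := by
  obtain ⟨T, ⟨P₁, P₀, d, e, ⟨finite₁, finite₀, cover₀, range_eq, projective₁, -⟩, ⟨toT⟩⟩,
    Q, π, finiteQ, coverQ, ⟨toKer⟩⟩ := h
  refine ⟨P₁, P₀, Q, d, e, toT.toLinearMap ∘ₗ π, ⟨finite₁, projective₁⟩, ⟨finite₀, cover₀.1⟩,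
    ⟨finiteQ, coverQ.1⟩, LinearMap.exact_iff.2 range_eq.symm, cover₀.2.1,
    toT.surjective.comp coverQ.2.1, ⟨toKer ≪≫ₗ LinearEquiv.ofEq _ _ ?_⟩⟩
  rw [LinearEquiv.ker_comp]

lemma gcdimLE.subsingleton_extM {n : ℕ} (h : gcdimLE R C n M) {i : ℕ} (hi : n < i) :
    Subsingleton (ExtM R M C i) := by
  induction n generalizing M i with
  | zero => exact h.2.2.1 i hi
  | succ n ih =>
    obtain ⟨X, K, f, g, hf, hg, hfg, hX, hK⟩ := h
    obtain ⟨i, rfl⟩ : ∃ j, i = j + 1 := ⟨i - 1, by lia⟩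
    have h : IsShortExact f g := ⟨hf, LinearMap.exact_iff.2 hfg, hg⟩
    have := subsingleton_extM_iff.1 (ih hK (Nat.succ_lt_succ_iff.1 hi))
    exact subsingleton_extM_iff.2 (h.connectingHom_surjective
      (subsingleton_extM_iff.1 (hX.2.2.1 (i + 1) i.succ_pos))).subsingleton

lemma exists_gcdimLE_and_eq_gcdim_of_gcdim_ne_top (h : gcdim R C M ≠ ⊤) :
    ∃ n : ℕ, gcdimLE R C n M ∧ n = gcdim R C M :=
  csInf_mem (Set.nonempty_iff_ne_empty.2 fun hs => h ((congrArg sInf hs).trans sInf_empty))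

lemma exists_not_subsingleton_extM_of_rgrade_ne_top (h : rgrade R C M ≠ ⊤) :
    ∃ n : ℕ, (0 < n ∧ ¬ Subsingleton (ExtM R M C n)) ∧ n = rgrade R C M :=
  csInf_mem (Set.nonempty_iff_ne_empty.2 fun hs => h ((congrArg sInf hs).trans sInf_empty))

lemma subsingleton_extM_of_lt_rgrade {i : ℕ} (hi : 0 < i) (hlt : i < rgrade R C M) :
    Subsingleton (ExtM R M C i) := by
  by_contra hExt
  exact hlt.not_ge (sInf_le ⟨i, ⟨hi, hExt⟩, rfl⟩)

lemma IsReducedGCPerfect.pos (h : IsReducedGCPerfect R C M) {n : ℕ} (hn : gcdim R C M = n) :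
    0 < n := by
  obtain ⟨m, ⟨hm, -⟩, hmn⟩ := exists_not_subsingleton_extM_of_rgrade_ne_top (h.2 ▸ h.1)
  rw [h.2, hn, Nat.cast_inj] at hmn
  exact hmn ▸ hm

lemma IsReducedGCPerfect.subsingleton_extM_iff (h : IsReducedGCPerfect R C M) {n : ℕ}
    (hn : gcdim R C M = n) {i : ℕ} (hi : 0 < i) : Subsingleton (ExtM R M C i) ↔ i ≠ n := by
  obtain ⟨m, ⟨-, hExt⟩, hmn⟩ := exists_not_subsingleton_extM_of_rgrade_ne_top (h.2 ▸ h.1)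
  obtain ⟨k, hk, hkn⟩ := exists_gcdimLE_and_eq_gcdim_of_gcdim_ne_top h.1
  rw [h.2, hn, Nat.cast_inj] at hmn
  rw [hn, Nat.cast_inj] at hkn
  subst hmn hkn
  refine ⟨fun hi' hik => hExt (hik ▸ hi'), fun hne => ?_⟩
  rcases hne.lt_or_gt with hlt | hgt
  · exact subsingleton_extM_of_lt_rgrade hi (by rw [h.2, hn]; exact_mod_cast hlt)
  · exact hk.subsingleton_extM hgt

lemma rdepth_extM_eq [IsLocalRing R] (n : ℕ) :
    rdepth R (ExtM R M C n) = moduleDepth R (ExtMod R M C n) :=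
  moduleDepth_congr (nonempty_extM_linearEquiv_ext M C n).some

theorem statement7_general [IsLocalRing R] [IsNoetherianRing R] (hC : IsSemidualizing R C) {n : ℕ}
    (hn : 0 < n) (hExt : ∀ i, 0 < i → (Subsingleton (ExtM R M C i) ↔ i ≠ n))
    (hpd : pdim R (ModuleCat.of R (M →ₗ[R] R)) ≠ ⊤) (hL : IsLambda R M L) :
    rdepth R L = n + rdepth R (ExtM R M C n) ∧
      (Module.Free R L ↔ rdepth R (ExtM R M C n) + n = rdepth R (ModuleCat.of R R)) := by
  obtain ⟨P₁, P₀, Q, d, e, π, ⟨_, _⟩, ⟨_, _⟩, ⟨_, _⟩, hde, he, hπ, ⟨toKer⟩⟩ :=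
    hL.exists_presentation
  obtain ⟨n, rfl⟩ := Nat.exists_eq_add_one.2 hn
  obtain ⟨m, hm⟩ := exists_hasProjectiveDimensionLE_of_pdim_ne_top hpd
  have pd_transpose := hasProjectiveDimensionLE_dualCoker hde he hm
  have not_projective : ¬ Module.Projective R M := fun _ =>
    (hExt (n + 1) hn).1 (subsingleton_extM_iff.2 (subsingleton_extMod_of_projective n)) rfl
  have lt_depth := moduleDepth_dualCoker_lt hde he not_projective pd_transpose
  have depth_dualCoker := moduleDepth_dualCoker_eq_of_isSemidualizing hC pd_transpose
  have depth_ext : moduleDepth R (DualCoker d R) = rdepth R (ExtM R M C (n + 1)) + n := by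
    rw [rdepth_extM_eq, ← depth_dualCoker]
    refine moduleDepth_dualCoker_eq hde he (fun i hi => subsingleton_extM_iff.1
      ((hExt (i + 1) i.succ_pos).2 (by simpa using hi))) ?_
    rwa [depth_dualCoker, moduleDepth_eq_of_isSemidualizing hC]
  have syzygy := isShortExact_subtype_ker hπ
  have depth_ker := syzygy.moduleDepth_left_eq_right_add_one_of_right_lt
    (lt_depth.trans_le moduleDepth_self_le_of_projective)
  have depth_lambda : moduleDepth R L = rdepth R (ExtM R M C (n + 1)) + (n + 1 : ℕ) := by
    rw [moduleDepth_congr toKer, depth_ker, depth_ext, Nat.cast_succ, add_assoc]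
  refine ⟨depth_lambda.trans (add_comm _ _), ?_⟩
  rw [← depth_lambda, moduleDepth_congr toKer,
    ← free_iff_moduleDepth_eq (syzygy.hasProjectiveDimensionLE_right_iff.1 pd_transpose)
      (depth_ker.trans_le (Order.add_one_le_of_lt lt_depth))]
  exact ⟨fun _ => .of_equiv toKer, fun _ => .of_equiv toKer.symm⟩

end Linkage

/-- over a Cohen-Macaulay Noetherian local ring, if `M` is reduced
`G_C`-perfect of `G_C`-dimension `n`, `G_C-dim(M^C) < ∞` and `pd(M^*) < ∞`, then
`depth(λM) = n + depth(Ext_R^n(M,C))`; in particular `λM` is free iff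
`depth(Ext_R^n(M,C)) = dim R - n`. -/
theorem statement7 [IsLocalRing R] [IsNoetherianRing R]
    (hCM : (rdepth R (ModuleCat.of R R) : WithBot ℕ∞) = ringKrullDim R)
    (C : ModuleCat.{u} R) (hC : IsSemidualizing R C)
    (M : ModuleCat.{u} R) (hMfin : Module.Finite R ↥M)
    (n : ℕ) (hred : IsReducedGCPerfect R C M) (hdim : gcdim R C M = n)
    (hdual : gcdim R C (ModuleCat.of R (↥M →ₗ[R] ↥C)) ≠ ⊤)
    (hpd : pdim R (ModuleCat.of R (↥M →ₗ[R] R)) ≠ ⊤) :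
    ∀ L : ModuleCat.{u} R, IsLambda R M L →
      rdepth R L = (n : ℕ∞) + rdepth R (ExtM R M C n) ∧
      (Module.Free R ↥L ↔
        (rdepth R (ExtM R M C n) : WithBot ℕ∞) + (n : ℕ∞) = ringKrullDim R) := by
  simpa only [← hCM, ← WithBot.coe_add, WithBot.coe_inj] using fun L =>
    statement7_general hC (hred.pos hdim) (fun _ => hred.subsingleton_extM_iff hdim) hpd (L := L)

end
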